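/- arXiv:2211.05747 — 3 statements merged into one kernel-verified Lean document; each statement's English description precedes it below -/
import Mathlib

section
/- Let θ ≥ 1/2, ε > 0, C₁ > 0, C₂ > 0, and K > 0 satisfy K² ≤ C₂ / (6 C₁² (2θ + 2ε)). Let g : ℝ → ℝ be differentiable with g(t) ≥ 0 for all t ∈ ℝ. Assume: (i) g(t) ≥ K² (|t| + 2)^(−2θ−2ε) for all t with |t| ≤ 1; and (ii) |g′(t)| ≥ (C₂ / C₁²) (|t| + 2)^(−2θ−ε) − 3 g(t) for all t with |t| ≥ 1. Then g(t) ≥ K² (|t| + 2)^(−2θ−2ε) for all t ∈ ℝ. -/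
/-!
Let `f t = M * (|t| + b) ^ p` with `p < 0`. If `g < f` somewhere, then `g - f`, which is bounded
below by `-f → 0`, attains a negative global minimum at some `c`. The inner bound forces `|c| > r`,
so `f` is differentiable at `c` and `g' c = f' c`, where `|f' c| < -p / (r + b) * f c`. But
`g c < f c` turns the differential inequality into `|g' c| ≥ -p / (r + b) * f c`.
-/

open Filter Topology

theorem le_of_forall_lt_not_isLocalMin_sub {X : Type*} [TopologicalSpace X] {f g : X → ℝ}
    (hf : Continuous f) (hg : Continuous g) (hg_nonneg : ∀ x, 0 ≤ g x)
    (hf_lim : Tendsto f (cocompact X) (𝓝 0))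
    (hmin : ∀ x, g x < f x → ¬ IsLocalMin (fun y => g y - f y) x) (x : X) : f x ≤ g x := by
  by_contra! hx
  have heventually : ∀ᶠ y in cocompact X, g x - f x ≤ g y - f y := by
    filter_upwards [hf_lim.eventually_le_const (sub_pos.2 hx)] with y hy
    linarith [hg_nonneg y]
  obtain ⟨c, hc⟩ := (hg.sub hf).exists_forall_le' x heventually
  have hgc : g c < f c := sub_neg.1 ((hc x).trans_lt (sub_neg.2 hx))
  exact hmin c hgc (Eventually.of_forall hc)

theorem tendsto_norm_add_rpow_cocompact_zero {E : Type*} [SeminormedAddGroup E] [ProperSpace E]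
    (b : ℝ) {p : ℝ} (hp : p < 0) :
    Tendsto (fun x : E => (‖x‖ + b) ^ p) (cocompact E) (𝓝 0) := by
  have hpow : Tendsto (fun y : ℝ => y ^ p) atTop (𝓝 0) := by
    simpa only [neg_neg] using tendsto_rpow_neg_atTop (neg_pos.2 hp)
  exact hpow.comp (tendsto_atTop_add_const_right _ b (tendsto_norm_cocompact_atTop (E := E)))

theorem hasDerivAt_abs_add_rpow {b p t : ℝ} (ht : t ≠ 0) (hb : |t| + b ≠ 0) :
    HasDerivAt (fun s : ℝ => (|s| + b) ^ p) (SignType.sign t * p * (|t| + b) ^ (p - 1)) t :=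
  ((hasDerivAt_abs ht).add_const b).rpow_const (Or.inl hb)

theorem abs_deriv_eq_of_isLocalMin_sub_mul_rpow {g : ℝ → ℝ} {M b p c : ℝ}
    (hg : DifferentiableAt ℝ g c) (hc : c ≠ 0) (hb : 0 < |c| + b)
    (hmin : IsLocalMin (fun t => g t - M * (|t| + b) ^ p) c) :
    |deriv g c| = |p| * |M| * (|c| + b) ^ p / (|c| + b) := by
  have hderiv : deriv g c = M * (SignType.sign c * p * (|c| + b) ^ (p - 1)) :=
    sub_eq_zero.1 <| hmin.hasDerivAt_eq_zero <|
      hg.hasDerivAt.sub ((hasDerivAt_abs_add_rpow hc hb.ne').const_mul M)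
  have hsign : |(SignType.sign c : ℝ)| = 1 := by
    rcases hc.lt_or_gt with h | h <;> simp [h]
  rw [hderiv, Real.rpow_sub_one hb.ne']
  simp only [abs_mul, abs_div, hsign, abs_of_pos hb, abs_of_pos (Real.rpow_pos_of_pos hb p)]
  ring

theorem stmt_0_general {M C L b r p q : ℝ} (hp : p < 0) (hpq : p ≤ q) (hb : 0 < b) (hr : 0 ≤ r)
    (hrb : 1 ≤ r + b) (hL : 0 ≤ L) (hMC : (L + -p / (r + b)) * M ≤ C)
    {g : ℝ → ℝ} (hg : Differentiable ℝ g) (hg_nonneg : ∀ t, 0 ≤ g t)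
    (h_inner : ∀ t, |t| ≤ r → M * (|t| + b) ^ p ≤ g t)
    (h_outer : ∀ t, r < |t| → C * (|t| + b) ^ q - L * g t ≤ |deriv g t|) (t : ℝ) :
    M * (|t| + b) ^ p ≤ g t := by
  have hbase (s : ℝ) : 0 < |s| + b := by positivity
  have hf_cont : Continuous fun s : ℝ => M * (|s| + b) ^ p :=
    continuous_const.mul <|
      (continuous_abs.add continuous_const).rpow_const fun s => Or.inl (hbase s).ne'
  have hf_lim : Tendsto (fun s : ℝ => M * (|s| + b) ^ p) (cocompact ℝ) (𝓝 0) := by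
    simpa only [mul_zero, Real.norm_eq_abs] using
      (tendsto_norm_add_rpow_cocompact_zero (E := ℝ) b hp).const_mul M
  refine le_of_forall_lt_not_isLocalMin_sub hf_cont hg.continuous hg_nonneg hf_lim
    (fun c hgc hmin => ?_) t
  have hrc : r < |c| := lt_of_not_ge fun h => hgc.not_ge (h_inner c h)
  have hc : c ≠ 0 := abs_pos.1 (hr.trans_lt hrc)
  have hfc : 0 < M * (|c| + b) ^ p := (hg_nonneg c).trans_lt hgc
  have hM : 0 < M := pos_of_mul_pos_left hfc (Real.rpow_nonneg (hbase c).le p)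
  have hC : 0 ≤ C := by
    have : 0 ≤ -p / (r + b) := div_nonneg (neg_nonneg.2 hp.le) (by linarith)
    exact le_trans (by positivity) hMC
  have hupper : |deriv g c| < -p / (r + b) * (M * (|c| + b) ^ p) := by
    rw [abs_deriv_eq_of_isLocalMin_sub_mul_rpow (hg c) hc (hbase c) hmin, abs_of_neg hp,
      abs_of_pos hM, mul_assoc, div_mul_eq_mul_div]
    exact div_lt_div_of_pos_left (mul_pos (neg_pos.2 hp) hfc) (by linarith) (by linarith)
  have hlower : -p / (r + b) * (M * (|c| + b) ^ p) ≤ |deriv g c| :=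
    calc -p / (r + b) * (M * (|c| + b) ^ p)
        = (L + -p / (r + b)) * M * (|c| + b) ^ p - L * (M * (|c| + b) ^ p) := by ring
      _ ≤ C * (|c| + b) ^ p - L * g c := by gcongr
      _ ≤ C * (|c| + b) ^ q - L * g c := by gcongr; linarith
      _ ≤ |deriv g c| := h_outer c hrc
  exact hupper.not_ge hlower

theorem stmt_0
    (θ ε C₁ C₂ K : ℝ)
    (hθ : 1 / 2 ≤ θ) (hε : 0 < ε) (hC₁ : 0 < C₁) (hC₂ : 0 < C₂) (hK : 0 < K)
    (hK2 : K ^ 2 ≤ C₂ / (6 * C₁ ^ 2 * (2 * θ + 2 * ε)))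
    (g : ℝ → ℝ) (hg : Differentiable ℝ g)
    (hgnn : ∀ t : ℝ, 0 ≤ g t)
    (h1 : ∀ t : ℝ, |t| ≤ 1 → K ^ 2 * (|t| + 2) ^ (-2 * θ - 2 * ε) ≤ g t)
    (h2 : ∀ t : ℝ, 1 ≤ |t| →
      C₂ / C₁ ^ 2 * (|t| + 2) ^ (-2 * θ - ε) - 3 * g t ≤ |deriv g t|) :
    ∀ t : ℝ, K ^ 2 * (|t| + 2) ^ (-2 * θ - 2 * ε) ≤ g t := by
  have hMC : (3 + -(-2 * θ - 2 * ε) / (1 + 2)) * K ^ 2 ≤ C₂ / C₁ ^ 2 :=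
    calc (3 + -(-2 * θ - 2 * ε) / (1 + 2)) * K ^ 2
        ≤ 6 * (2 * θ + 2 * ε) * K ^ 2 := by gcongr; linarith
      _ ≤ C₂ / C₁ ^ 2 := by
        rw [le_div_iff₀ (by positivity)] at hK2 ⊢
        linarith
  exact stmt_0_general (by linarith) (by linarith) two_pos zero_le_one (by norm_num) (by norm_num)
    hMC hg hgnn h1 fun t ht => h2 t ht.le
end

section
/- Let θ ≥ 1/2, ε > 0, C₁ > 0, C₂ > 0, and K > 0 satisfy K² ≤ C₂ / (6 C₁² (2θ + 2ε)). Let g : ℝ → ℝ be differentiable with g(t) ≥ 0 for all t ≥ 0. Assume: (i) g(t) ≥ K² (t + 2)^(−2θ−2ε) for all t ∈ [0, 1]; and (ii) |g′(t)| ≥ (C₂ / C₁²) (t + 2)^(−2θ−ε) − 3 g(t) for all t ≥ 1. Then g(t) ≥ K² (t + 2)^(−2θ−2ε) for all t ≥ 0. -/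
/-!
Compare `g` with a barrier `f` that tends to `0` at infinity. If `g - f` were negative somewhere on
`[a, ∞)`, it would attain a negative minimum there, since it is nonnegative at `a` and
asymptotically bounded below by `0`. The minimum is interior, so `g' = f'` at that point. For the
barrier `f t = κ (t + s) ^ (-p)` this is impossible: where `g < f`, the lower bound on `|g'|`
exceeds `|f'|`.
-/

open Set Filter Topology

theorem nonneg_of_deriv_ne_zero_of_neg {h : ℝ → ℝ} {a : ℝ} (hcont : ContinuousOn h (Ici a))
    (ha : 0 ≤ h a) (htop : ∀ m < 0, ∀ᶠ t in atTop, m ≤ h t)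
    (hderiv : ∀ t, a < t → h t < 0 → deriv h t ≠ 0) {t : ℝ} (ht : a ≤ t) : 0 ≤ h t := by
  by_contra! hneg
  have hcoercive : ∀ᶠ x in cocompact ℝ ⊓ 𝓟 (Ici a), h t ≤ h x := by
    rw [eventually_inf_principal, cocompact_eq_atBot_atTop, eventually_sup]
    exact ⟨(eventually_lt_atBot a).mono fun x hxa hax ↦ absurd hax hxa.not_ge,
      (htop _ hneg).mono fun x hx _ ↦ hx⟩
  obtain ⟨x, hax, hmin⟩ := hcont.exists_isMinOn' isClosed_Ici ht hcoercive
  have hx_neg : h x < 0 := (hmin ht).trans_lt hneg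
  have hx_gt : a < x := lt_of_le_of_ne hax fun hEq ↦ by
    subst hEq
    exact ha.not_gt hx_neg
  exact hderiv x hx_gt hx_neg (hmin.isLocalMin (Ici_mem_nhds hx_gt)).deriv_eq_zero

theorem le_of_deriv_ne_deriv_of_lt {f g : ℝ → ℝ} {a : ℝ}
    (hf : DifferentiableOn ℝ f (Ici a)) (hg : DifferentiableOn ℝ g (Ici a))
    (hf_lim : Tendsto f atTop (𝓝 0)) (hg_nonneg : ∀ᶠ t in atTop, 0 ≤ g t) (ha : f a ≤ g a)
    (hderiv : ∀ t, a < t → g t < f t → deriv g t ≠ deriv f t) {t : ℝ} (ht : a ≤ t) :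
    f t ≤ g t := by
  refine sub_nonneg.mp (nonneg_of_deriv_ne_zero_of_neg (h := fun x ↦ g x - f x)
    (hg.continuousOn.sub hf.continuousOn) (sub_nonneg.mpr ha) ?_ ?_ ht)
  · intro m hm
    filter_upwards [hg_nonneg, hf_lim.eventually_le_const (neg_pos.mpr hm)] with x hgx hfx
    linarith
  · intro x hx hlt
    rw [deriv_fun_sub (hg.differentiableAt (Ici_mem_nhds hx))
      (hf.differentiableAt (Ici_mem_nhds hx)), sub_ne_zero]
    exact hderiv x hx (sub_neg.mp hlt)

theorem hasDerivAt_const_mul_add_rpow_neg (κ p : ℝ) {s t : ℝ} (h : 0 < t + s) :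
    HasDerivAt (fun x ↦ κ * (x + s) ^ (-p)) (-(κ * p * (t + s) ^ (-p - 1))) t :=
  ((((hasDerivAt_id' t).add_const s).rpow_const (Or.inl h.ne')).const_mul κ).congr_deriv
    (by ring)

theorem tendsto_const_mul_add_rpow_neg_atTop (κ s : ℝ) {p : ℝ} (hp : 0 < p) :
    Tendsto (fun t : ℝ ↦ κ * (t + s) ^ (-p)) atTop (𝓝 0) := by
  simpa only [mul_zero, Function.comp_def, id] using
    ((tendsto_rpow_neg_atTop hp).comp (tendsto_atTop_add_const_right _ s tendsto_id)).const_mul κ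

theorem mul_rpow_neg_sub_one_lt_sub {κ A c p q y τ : ℝ} (hκ : 0 < κ) (hp : 0 < p) (hc : 0 ≤ c)
    (hqp : q ≤ p) (hA : κ * (p + c) ≤ A) (hτ : 1 < τ) (hy : y ≤ κ * τ ^ (-p)) :
    κ * p * τ ^ (-p - 1) < A * τ ^ (-q) - c * y := by
  have hA_nonneg : 0 ≤ A := le_trans (by positivity) hA
  calc κ * p * τ ^ (-p - 1)
      < κ * p * τ ^ (-p) := by
        gcongr ?_ * ?_
        exact Real.rpow_lt_rpow_of_exponent_lt hτ (by linarith)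
    _ = κ * (p + c) * τ ^ (-p) - c * (κ * τ ^ (-p)) := by ring
    _ ≤ A * τ ^ (-q) - c * y := by
        gcongr
        exact hτ.le

theorem const_mul_add_rpow_neg_le_of_le_abs_deriv {κ A c p q s a : ℝ} {g : ℝ → ℝ}
    (hκ : 0 < κ) (hp : 0 < p) (hc : 0 ≤ c) (hqp : q ≤ p) (hA : κ * (p + c) ≤ A)
    (has : 1 ≤ a + s) (hg : DifferentiableOn ℝ g (Ici a)) (hg_nonneg : ∀ᶠ t in atTop, 0 ≤ g t)
    (ha : κ * (a + s) ^ (-p) ≤ g a)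
    (hderiv : ∀ t, a < t → A * (t + s) ^ (-q) - c * g t ≤ |deriv g t|) {t : ℝ} (ht : a ≤ t) :
    κ * (t + s) ^ (-p) ≤ g t := by
  have hbarrier {x : ℝ} (hx : a ≤ x) := hasDerivAt_const_mul_add_rpow_neg κ p
    (show 0 < x + s by linarith)
  refine le_of_deriv_ne_deriv_of_lt (f := fun x ↦ κ * (x + s) ^ (-p))
    (fun x hx ↦ (hbarrier hx).differentiableAt.differentiableWithinAt) hg
    (tendsto_const_mul_add_rpow_neg_atTop κ s hp) hg_nonneg ha ?_ ht
  intro x hx hlt hEq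
  have hτ : 1 < x + s := by linarith
  have habs : |deriv g x| = κ * p * (x + s) ^ (-p - 1) := by
    rw [hEq, (hbarrier hx.le).deriv, abs_neg, abs_of_nonneg (by positivity)]
  exact (mul_rpow_neg_sub_one_lt_sub hκ hp hc hqp hA hτ hlt.le).not_ge
    ((hderiv x hx).trans_eq habs)

theorem stmt_1
    (θ ε C₁ C₂ K : ℝ)
    (hθ : 1 / 2 ≤ θ) (hε : 0 < ε) (hC₁ : 0 < C₁) (hC₂ : 0 < C₂) (hK : 0 < K)
    (hK2 : K ^ 2 ≤ C₂ / (6 * C₁ ^ 2 * (2 * θ + 2 * ε)))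
    (g : ℝ → ℝ) (hg : Differentiable ℝ g)
    (hgnn : ∀ t : ℝ, 0 ≤ t → 0 ≤ g t)
    (h1 : ∀ t : ℝ, t ∈ Set.Icc (0 : ℝ) 1 → K ^ 2 * (t + 2) ^ (-2 * θ - 2 * ε) ≤ g t)
    (h2 : ∀ t : ℝ, 1 ≤ t →
      C₂ / C₁ ^ 2 * (t + 2) ^ (-2 * θ - ε) - 3 * g t ≤ |deriv g t|) :
    ∀ t : ℝ, 0 ≤ t → K ^ 2 * (t + 2) ^ (-2 * θ - 2 * ε) ≤ g t := by
  intro t ht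
  obtain ht1 | ht1 := le_total t 1
  · exact h1 t ⟨ht, ht1⟩
  have hconst : K ^ 2 * (2 * θ + 2 * ε + 3) ≤ C₂ / C₁ ^ 2 := calc
    K ^ 2 * (2 * θ + 2 * ε + 3) ≤ K ^ 2 * (6 * (2 * θ + 2 * ε)) := by gcongr; linarith
    _ ≤ C₂ / C₁ ^ 2 := by
      rw [le_div_iff₀ (by positivity)] at hK2 ⊢
      linarith
  have hp : -2 * θ - 2 * ε = -(2 * θ + 2 * ε) := by ring
  have hq : -2 * θ - ε = -(2 * θ + ε) := by ring
  rw [hp] at h1 ⊢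
  rw [hq] at h2
  exact const_mul_add_rpow_neg_le_of_le_abs_deriv (by positivity) (by linarith) (by norm_num)
    (by linarith) hconst (by norm_num) hg.differentiableOn ((eventually_ge_atTop 0).mono hgnn)
    (h1 1 (by norm_num)) (fun x hx ↦ h2 x hx.le) ht1
end

section
/- Let θ ≥ 1/2, ε > 0, D > 0, and K > 0 satisfy K² (2θ + 2ε) < 3D. Then there do not exist real numbers 1 ≤ t₁ < t₂ and a differentiable function g : ℝ → ℝ such that g′(t) ≤ −D (t + 2)^(−2θ−ε) for all t ∈ (t₁, t₂), g(t₁) = K² (t₁ + 2)^(−2θ−2ε), and g(t₂) = K² (t₂ + 2)^(−2θ−2ε). -/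
/-!
Two functions that agree at both ends of an interval cannot have strictly ordered derivatives
inside it. Here `g` is compared with the barrier `B t = K ^ 2 * (t + 2) ^ (-2 * θ - 2 * ε)`: since
`B' t = -(K ^ 2 * (2 * θ + 2 * ε)) * (t + 2) ^ (-2 * θ - 2 * ε - 1)`, the bound on `g'` gives
`g' t < B' t` as soon as `K ^ 2 * (2 * θ + 2 * ε) < D * (t + 2) ^ (1 + ε)`, and this holds because
`3 ≤ t + 2`. Comparing derivatives pointwise avoids integrating over `[t₁, t₂]`.
-/

theorem sub_lt_sub_of_hasDerivAt_lt {f g f' g' : ℝ → ℝ} {a b : ℝ} (hab : a < b)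
    (hf : ContinuousOn f (Set.Icc a b)) (hg : ContinuousOn g (Set.Icc a b))
    (hf' : ∀ x ∈ Set.Ioo a b, HasDerivAt f (f' x) x)
    (hg' : ∀ x ∈ Set.Ioo a b, HasDerivAt g (g' x) x)
    (hlt : ∀ x ∈ Set.Ioo a b, f' x < g' x) : f b - f a < g b - g a := by
  have hanti : StrictAntiOn (f - g) (Set.Icc a b) := by
    refine strictAntiOn_of_hasDerivWithinAt_neg (f' := f' - g') (convex_Icc a b) (hf.sub hg) ?_ ?_
    all_goals rw [interior_Icc]
    · exact fun x hx ↦ ((hf' x hx).sub (hg' x hx)).hasDerivWithinAt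
    · exact fun x hx ↦ sub_neg.mpr (hlt x hx)
  have hsub : f b - g b < f a - g a :=
    hanti (Set.left_mem_Icc.mpr hab.le) (Set.right_mem_Icc.mpr hab.le) hab
  linarith

theorem mul_rpow_lt_mul_rpow_of_lt_mul_rpow_sub {a x C D p q : ℝ} (ha : 0 < a) (hax : a ≤ x)
    (hD : 0 ≤ D) (hpq : p ≤ q) (hC : C < D * a ^ (q - p)) : C * x ^ p < D * x ^ q := by
  have hx : 0 < x := ha.trans_le hax
  have hpow : a ^ (q - p) ≤ x ^ (q - p) :=
    Real.rpow_le_rpow ha.le hax (sub_nonneg.mpr hpq)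
  calc
    C * x ^ p < D * a ^ (q - p) * x ^ p := by gcongr
    _ ≤ D * x ^ (q - p) * x ^ p := by gcongr
    _ = D * x ^ q := by rw [mul_assoc, ← Real.rpow_add hx, sub_add_cancel]

theorem lt_mul_add_rpow_of_hasDerivAt_le {g g' : ℝ → ℝ} {a b s c D p q : ℝ}
    (has : 0 < a + s) (hab : a < b) (hD : 0 ≤ D) (hpq : p - 1 ≤ q)
    (hc : -(c * p) < D * (a + s) ^ (q - (p - 1)))
    (hg : ContinuousOn g (Set.Icc a b))
    (hg' : ∀ t ∈ Set.Ioo a b, HasDerivAt g (g' t) t)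
    (hdecay : ∀ t ∈ Set.Ioo a b, g' t ≤ -D * (t + s) ^ q)
    (ha : g a ≤ c * (a + s) ^ p) : g b < c * (b + s) ^ p := by
  have hbarrier : ∀ t, a ≤ t →
      HasDerivAt (fun u ↦ c * (u + s) ^ p) (c * p * (t + s) ^ (p - 1)) t := fun t ht ↦ by
    have hne : t + s ≠ 0 := by linarith
    simpa only [one_mul, mul_assoc, id_eq] using
      (((hasDerivAt_id t).add_const s).rpow_const (Or.inl hne)).const_mul c
  have hlt : ∀ t ∈ Set.Ioo a b, g' t < c * p * (t + s) ^ (p - 1) := fun t ht ↦ by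
    have hrate : -(c * p) * (t + s) ^ (p - 1) < D * (t + s) ^ q :=
      mul_rpow_lt_mul_rpow_of_lt_mul_rpow_sub has (by linarith [ht.1]) hD hpq hc
    linarith [hdecay t ht]
  have hsub : g b - g a < c * (b + s) ^ p - c * (a + s) ^ p :=
    sub_lt_sub_of_hasDerivAt_lt hab hg
      (fun t ht ↦ (hbarrier t ht.1).continuousAt.continuousWithinAt)
      hg' (fun t ht ↦ hbarrier t ht.1.le) hlt
  linarith

theorem stmt_3_general {g g' : ℝ → ℝ} {θ ε D c t₁ t₂ : ℝ} (hε : 0 ≤ ε) (hD : 0 ≤ D)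
    (hc : c * (2 * θ + 2 * ε) < 3 * D) (ht₁ : 1 ≤ t₁) (ht : t₁ < t₂)
    (hg : ContinuousOn g (Set.Icc t₁ t₂))
    (hg' : ∀ t ∈ Set.Ioo t₁ t₂, HasDerivAt g (g' t) t)
    (hdecay : ∀ t ∈ Set.Ioo t₁ t₂, g' t ≤ -D * (t + 2) ^ (-2 * θ - ε))
    (hstart : g t₁ ≤ c * (t₁ + 2) ^ (-2 * θ - 2 * ε)) :
    g t₂ < c * (t₂ + 2) ^ (-2 * θ - 2 * ε) := by
  have hthree : 3 ≤ (t₁ + 2) ^ (1 + ε) :=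
    calc
      3 ≤ t₁ + 2 := by linarith
      _ ≤ (t₁ + 2) ^ (1 + ε) := Real.self_le_rpow_of_one_le (by linarith) (by linarith)
  refine lt_mul_add_rpow_of_hasDerivAt_le (by linarith) ht hD (by linarith) ?_ hg hg' hdecay hstart
  calc
    -(c * (-2 * θ - 2 * ε)) = c * (2 * θ + 2 * ε) := by ring
    _ < D * 3 := by linarith
    _ ≤ D * (t₁ + 2) ^ (1 + ε) := by gcongr
    _ = D * (t₁ + 2) ^ (-2 * θ - ε - (-2 * θ - 2 * ε - 1)) := by ring_nf

theorem stmt_3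
    (θ ε D K : ℝ)
    (hθ : 1 / 2 ≤ θ) (hε : 0 < ε) (hD : 0 < D) (hK : 0 < K)
    (hK2 : K ^ 2 * (2 * θ + 2 * ε) < 3 * D) :
    ¬ ∃ (t₁ t₂ : ℝ) (g : ℝ → ℝ), 1 ≤ t₁ ∧ t₁ < t₂ ∧ Differentiable ℝ g ∧
      (∀ t ∈ Set.Ioo t₁ t₂, deriv g t ≤ -D * (t + 2) ^ (-2 * θ - ε)) ∧
      g t₁ = K ^ 2 * (t₁ + 2) ^ (-2 * θ - 2 * ε) ∧
      g t₂ = K ^ 2 * (t₂ + 2) ^ (-2 * θ - 2 * ε) := by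
  rintro ⟨t₁, t₂, g, ht₁, ht, hg, hdecay, hstart, hend⟩
  exact (stmt_3_general hε.le hD.le hK2 ht₁ ht hg.continuous.continuousOn
    (fun t _ ↦ (hg t).hasDerivAt) hdecay hstart.le).ne hend
end
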